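/- arXiv:1708.03250 — 2 statements merged into one kernel-verified Lean document; each statement's English description precedes it below -/
import Mathlib

section
/- Let P_1, ..., P_{n+1} be lattice polytopes in R^n with each dim(P_i) ≥ 1 and dim(P_1 + ... + P_{n+1}) = n. Then there exists a nonempty subset I of {1,...,n+1} such that the Minkowski sum P_I contains a lattice point in its relative interior. (Equivalently, the mixed degree of a proper family is nonnegative.) -/
open scoped Pointwise
open MeasureTheory Finset

def IsLatticePt {n : ℕ} (x : Fin n → ℝ) : Prop := ∀ i, ∃ z : ℤ, x i = (z : ℝ)

def IsLatticePolytope {n : ℕ} (P : Set (Fin n → ℝ)) : Prop :=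
  ∃ V : Finset (Fin n → ℝ), V.Nonempty ∧ (∀ v ∈ V, IsLatticePt v) ∧
    P = convexHull ℝ (V : Set (Fin n → ℝ))

noncomputable def adim {n : ℕ} (A : Set (Fin n → ℝ)) : ℕ :=
  Module.finrank ℝ (affineSpan ℝ A).direction

def relintLat {n : ℕ} (A : Set (Fin n → ℝ)) : Set (Fin n → ℝ) :=
  {x ∈ intrinsicInterior ℝ A | IsLatticePt x}

def intLat {n : ℕ} (A : Set (Fin n → ℝ)) : Set (Fin n → ℝ) :=
  {x ∈ interior A | IsLatticePt x}

noncomputable def mixedVol {n m : ℕ} (P : Fin m → Set (Fin n → ℝ)) : ℝ :=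
  ∑ I : Finset (Fin m), (-1 : ℝ) ^ (m - I.card) * (volume (∑ i ∈ I, P i)).toReal

/-!
Let `V i` be the vertex set of `P i`. A vertex sum `∑ i ∈ I, v i` lies in the relative interior of
`∑ i ∈ I, P i` as soon as the cone generated by the differences `x - v i`, with `i ∈ I` and
`x ∈ V i`, is a linear subspace. If there are more polytopes than the dimension of their sum, Rado's
transversal theorem gives a subfamily `J`, an index `j₀ ∈ J` and directions `x i - y i` with
`x i, y i ∈ V i`, one for each `i ∈ J \ {j₀}`, which span all differences of vertices of the
polytopes in `J`.

Start with `I = {j₀}` and any vertex. The negative of the sum of the generators of the cone is,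
modulo its lineality space, a combination of the directions `x i - y i` with `i ∈ J \ I`. Add to
`I` every `i` with a nonzero coefficient, with `v i` the endpoint `x i` or `y i` prescribed by the
sign of the coefficient: the previous cone and the new directions become part of the lineality
space. When no index is added, the cone is a subspace.
-/

section Rado

variable {ι α : Type*} [DecidableEq α]

/-- Rado's condition for the sets `A i`, `i ∈ J`: the analogue of Hall's condition in which the
cardinality of a union is replaced by a rank function `f`. -/
def RadoCondition (f : Finset α → ℕ) (J : Finset ι) (A : ι → Finset α) : Prop :=
  ∀ K ⊆ J, #K ≤ f (K.biUnion A)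

variable {f : Finset α → ℕ} {J : Finset ι} {A : ι → Finset α}

lemma exists_card_ge_of_not_radoCondition_erase [DecidableEq ι] (hA : RadoCondition f J A)
    {i : ι} {x : α} (hx : ¬ RadoCondition f J (Function.update A i ((A i).erase x))) :
    ∃ K ⊆ J, i ∉ K ∧ f ((A i).erase x ∪ K.biUnion A) ≤ #K := by
  set B := Function.update A i ((A i).erase x)
  have hBi : B i = (A i).erase x := Function.update_self ..
  have hBj {j : ι} (hj : j ≠ i) : B j = A j := Function.update_of_ne hj ..
  obtain ⟨K, hKJ, hK⟩ : ∃ K ⊆ J, f (K.biUnion B) < #K := by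
    simpa only [RadoCondition, not_forall, not_le, exists_prop] using hx
  have hiK : i ∈ K := by
    by_contra hiK
    have hBA : K.biUnion B = K.biUnion A :=
      biUnion_congr rfl fun j hj => hBj (ne_of_mem_of_not_mem hj hiK)
    exact (hA K hKJ).not_gt (hBA ▸ hK)
  refine ⟨K.erase i, (erase_subset _ _).trans hKJ, notMem_erase i K, ?_⟩
  have hunion : (A i).erase x ∪ (K.erase i).biUnion A = K.biUnion B := by
    conv_rhs => rw [← insert_erase hiK, biUnion_insert, hBi]
    exact congrArg _ (biUnion_congr rfl fun j hj => (hBj (ne_of_mem_erase hj)).symm)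
  rw [hunion, card_erase_of_mem hiK]
  exact Nat.le_sub_one_of_lt hK

lemma radoCondition_erase_or_erase [DecidableEq ι] (hf : Monotone f)
    (hsub : ∀ s t, f (s ∪ t) + f (s ∩ t) ≤ f s + f t) (hA : RadoCondition f J A)
    {i : ι} (hi : i ∈ J) {x y : α} (hxy : x ≠ y) :
    RadoCondition f J (Function.update A i ((A i).erase x)) ∨
      RadoCondition f J (Function.update A i ((A i).erase y)) := by
  by_contra! hcon
  obtain ⟨K, hKJ, hiK, hK⟩ := exists_card_ge_of_not_radoCondition_erase hA hcon.1
  obtain ⟨L, hLJ, hiL, hL⟩ := exists_card_ge_of_not_radoCondition_erase hA hcon.2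
  set X := (A i).erase x ∪ K.biUnion A
  set Y := (A i).erase y ∪ L.biUnion A
  have hunion : #(K ∪ L) + 1 ≤ f (X ∪ Y) := by
    rw [← card_insert_of_notMem (notMem_union.2 ⟨hiK, hiL⟩)]
    refine (hA _ (insert_subset hi (union_subset hKJ hLJ))).trans (hf fun a ha => ?_)
    grind
  have hinter : #(K ∩ L) ≤ f (X ∩ Y) :=
    (hA _ (inter_subset_left.trans hKJ)).trans (hf fun a ha => by grind)
  have hcard := card_union_add_card_inter K L
  have := hsub X Y
  omega

theorem exists_transversal_of_radoCondition [Nonempty α] (hf : Monotone f) (hf₀ : f ∅ = 0)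
    (hsub : ∀ s t, f (s ∪ t) + f (s ∩ t) ≤ f s + f t) (hA : RadoCondition f J A) :
    ∃ d : ι → α, (∀ i ∈ J, d i ∈ A i) ∧ ∀ K ⊆ J, #K ≤ f (K.image d) := by
  classical
  induction hN : ∑ i ∈ J, #(A i) using Nat.strong_induction_on generalizing A with
  | _ N ih =>
  by_cases hone : ∀ i ∈ J, #(A i) ≤ 1
  · have hsingleton : ∀ i ∈ J, ∃ a, A i = {a} := fun i hi => by
      refine card_eq_one.1 ((hone i hi).antisymm (card_pos.2 (nonempty_iff_ne_empty.2 ?_)))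
      intro hempty
      simpa [hempty, hf₀] using hA {i} (singleton_subset_iff.2 hi)
    choose! d hd using hsingleton
    refine ⟨d, fun i hi => hd i hi ▸ mem_singleton_self _, fun K hK => ?_⟩
    rw [← biUnion_singleton, ← biUnion_congr rfl fun i hi => hd i (hK hi)]
    exact hA K hK
  · push Not at hone
    obtain ⟨i, hi, hcard⟩ := hone
    obtain ⟨x, hx, y, hy, hxy⟩ := one_lt_card.1 hcard
    have hshrink : ∃ z ∈ A i, RadoCondition f J (Function.update A i ((A i).erase z)) :=
      (radoCondition_erase_or_erase hf hsub hA hi hxy).elim (⟨x, hx, ·⟩) (⟨y, hy, ·⟩)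
    obtain ⟨z, hz, hB⟩ := hshrink
    have hle : Function.update A i ((A i).erase z) ≤ A :=
      update_le_self_iff.2 (erase_subset _ _)
    have hlt : ∑ j ∈ J, #(Function.update A i ((A i).erase z) j) < N := by
      rw [← hN]
      refine sum_lt_sum (fun j _ => card_le_card (hle j)) ⟨i, hi, ?_⟩
      rw [Function.update_self]
      exact card_erase_lt_of_mem hz
    obtain ⟨d, hd, hdK⟩ := ih _ hlt hB rfl
    exact ⟨d, fun j hj => hle j (hd j hj), hdK⟩

end Rado

section Span

variable {ι 𝕜 E : Type*} [DivisionRing 𝕜] [AddCommGroup E] [Module 𝕜 E]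

lemma monotone_finrank_coe : Monotone fun s : Finset E => (s : Set E).finrank 𝕜 :=
  fun _ _ hst => Submodule.finrank_mono (Submodule.span_mono (coe_subset.2 hst))

lemma finrank_union_add_finrank_inter_le [DecidableEq E] (s t : Finset E) :
    (↑(s ∪ t) : Set E).finrank 𝕜 + (↑(s ∩ t) : Set E).finrank 𝕜 ≤
      (s : Set E).finrank 𝕜 + (t : Set E).finrank 𝕜 := by
  simp only [Set.finrank]
  rw [← Submodule.finrank_sup_add_finrank_inf_eq (Submodule.span 𝕜 (s : Set E)), coe_union,
    Submodule.span_union, coe_inter]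
  exact Nat.add_le_add_left (Submodule.finrank_mono (le_inf
    (Submodule.span_mono Set.inter_subset_left) (Submodule.span_mono Set.inter_subset_right))) _

-- A minimal deficient subfamily `J` has rank `#J - 1`, so a transversal of any `#J - 1` of its
-- members that is linearly independent spans all of them.
theorem exists_transversal_span_of_finrank_lt [DecidableEq ι] [DecidableEq E]
    {s : Finset ι} {A : ι → Finset E}
    (h : (s.biUnion A : Set E).finrank 𝕜 < #s) :
    ∃ J ⊆ s, ∃ j₀ ∈ J, ∃ d : ι → E, (∀ i ∈ J.erase j₀, d i ∈ A i) ∧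
      ∀ i ∈ J, (A i : Set E) ⊆ Submodule.span 𝕜 (d '' (J.erase j₀ : Set ι)) := by
  obtain ⟨J, hJs, hJ⟩ := exists_minimal_le_of_wellFoundedLT
    (fun J : Finset ι => (J.biUnion A : Set E).finrank 𝕜 < #J) s h
  obtain ⟨j₀, hj₀⟩ : J.Nonempty := card_pos.1 (Nat.zero_lt_of_lt hJ.prop)
  have hrado : RadoCondition (fun t : Finset E => (t : Set E).finrank 𝕜) (J.erase j₀) A :=
    fun K hK => not_lt.1 (hJ.not_prop_of_lt (hK.trans_ssubset (erase_ssubset hj₀)))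
  obtain ⟨d, hdA, hd⟩ := exists_transversal_of_radoCondition monotone_finrank_coe
    (by simp [Set.finrank]) finrank_union_add_finrank_inter_le hrado
  refine ⟨J, hJs, j₀, hj₀, d, hdA, fun i hi => ?_⟩
  have hdJ : (J.erase j₀).image d ⊆ J.biUnion A :=
    image_subset_iff.2 fun j hj => mem_biUnion.2 ⟨j, mem_of_mem_erase hj, hdA j hj⟩
  have hrank : (J.biUnion A : Set E).finrank 𝕜 ≤ ((J.erase j₀).image d : Set E).finrank 𝕜 :=
    calc (J.biUnion A : Set E).finrank 𝕜 ≤ #J - 1 := Nat.le_sub_one_of_lt hJ.prop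
      _ = #(J.erase j₀) := (card_erase_of_mem hj₀).symm
      _ ≤ _ := hd _ subset_rfl
  rw [← coe_image,
    Submodule.eq_of_le_of_finrank_le (Submodule.span_mono (coe_subset.2 hdJ)) hrank]
  exact (coe_subset.2 (subset_biUnion_of_mem A hi)).trans Submodule.subset_span

lemma sub_mem_vectorSpan_sum {s : Finset ι} {V : ι → Set E} (hV : ∀ i ∈ s, (V i).Nonempty)
    {i : ι} (hi : i ∈ s) {a b : E} (ha : a ∈ V i) (hb : b ∈ V i) :
    a - b ∈ vectorSpan 𝕜 (∑ j ∈ s, V j) := by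
  classical
  obtain ⟨r, hr⟩ : (∑ j ∈ s.erase i, V j).Nonempty := by
    choose! v hv using hV
    exact ⟨_, Set.finsetSum_mem_finsetSum _ _ v fun j hj => hv j (mem_of_mem_erase hj)⟩
  rw [← add_sum_erase s V hi, ← add_sub_add_right_eq_sub a b r]
  exact vsub_mem_vectorSpan 𝕜 (Set.add_mem_add ha hr) (Set.add_mem_add hb hr)

end Span

section Cone

variable {ι 𝕜 E : Type*} [Field 𝕜] [LinearOrder 𝕜] [IsStrictOrderedRing 𝕜]
  [AddCommGroup E] [Module 𝕜 E]

lemma mem_lineal_of_sum_mem {C : PointedCone 𝕜 E} {s : Finset ι} {g : ι → E}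
    (hg : ∀ i ∈ s, g i ∈ C) (hsum : ∑ i ∈ s, g i ∈ C.lineal) {i : ι} (hi : i ∈ s) :
    g i ∈ C.lineal := by
  rw [← sum_coe_sort] at hsum
  exact (PointedCone.IsFaceOf.lineal C).mem_of_sum_mem
    (f := fun j : s => g j) (fun j => hg j j.2) hsum ⟨i, hi⟩

/-
Write `-∑ g ∈ G, g = l + ∑ i ∈ T, a i • d i` with `l` in the lineality space of the hull of `G`. A
cone `C` containing `G` and every `a i • d i` also contains `l` and `-l`, so `0` is a sum of
elements of `C`, all of which must lie in `C.lineal`.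
-/
theorem exists_coeff_forall_hull_le_lineal {G : Finset E} {T : Finset ι} {d : ι → E}
    (hG : ∀ g ∈ G, g ∈ (PointedCone.hull 𝕜 (G : Set E)).lineal ⊔
      Submodule.span 𝕜 (d '' (T : Set ι))) :
    ∃ a : ι → 𝕜, ∀ C : PointedCone 𝕜 E, PointedCone.hull 𝕜 (G : Set E) ≤ C →
      (∀ i ∈ T, a i • d i ∈ C) →
        PointedCone.hull 𝕜 (G : Set E) ≤ C.lineal ∧ ∀ i ∈ T, a i • d i ∈ C.lineal := by
  obtain ⟨l, hl, r, hr, hlr⟩ := Submodule.mem_sup.1 (neg_mem (sum_mem hG))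
  obtain ⟨a, rfl⟩ := (Submodule.mem_span_image_finset_iff_exists_fun' 𝕜).1 hr
  refine ⟨a, fun C hGC haC => ?_⟩
  have hgC : ∀ g ∈ G, g ∈ C := fun g hg => hGC (PointedCone.subset_hull hg)
  have hlC : l ∈ C.lineal := ⟨hGC hl.1, hGC hl.2⟩
  have hzero : (∑ g ∈ G, g + ∑ i ∈ T, a i • d i) + l = 0 := by
    rw [add_assoc, add_comm _ l, hlr, add_neg_cancel]
  have hsum : ∑ g ∈ G, g + ∑ i ∈ T, a i • d i ∈ C.lineal := by
    rw [eq_neg_of_add_eq_zero_left hzero]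
    exact neg_mem hlC
  have hface := ((PointedCone.IsFaceOf.lineal C).add_mem_iff_mem (sum_mem hgC) (sum_mem haC)).1 hsum
  exact ⟨Submodule.span_le.2 fun g hg => mem_lineal_of_sum_mem hgC hface.1 hg,
    fun i hi => mem_lineal_of_sum_mem haC hface.2 hi⟩

lemma exists_pos_add_smul_mem_of_mem_hull {Q S : Set E} (hQ : Convex 𝕜 Q) {p : E}
    (hp : p ∈ Q) (hS : ∀ g ∈ S, p + g ∈ Q) {x : E} (hx : x ∈ PointedCone.hull 𝕜 S) :
    ∃ r : 𝕜, 0 < r ∧ p + r • x ∈ Q := by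
  have hpointed : (ConvexCone.hull 𝕜 (-p +ᵥ Q)).Pointed :=
    ConvexCone.subset_hull ⟨p, hp, neg_add_cancel p⟩
  have hSK : PointedCone.hull 𝕜 S ≤ (ConvexCone.hull 𝕜 (-p +ᵥ Q)).toPointedCone hpointed :=
    Submodule.span_le.2 fun g hg => ConvexCone.subset_hull ⟨p + g, hS g hg, neg_add_cancel_left p g⟩
  obtain ⟨r, hr, _, ⟨q, hq, rfl⟩, rfl⟩ := (ConvexCone.mem_hull_of_convex (hQ.vadd _)).1 (hSK hx)
  refine ⟨r⁻¹, inv_pos.2 hr, ?_⟩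
  simpa only [vadd_eq_add, inv_smul_smul₀ hr.ne', add_neg_cancel_left] using hq

variable (𝕜) in
/-- The cone generated by the differences `x - v i` with `i ∈ I` and `x ∈ V i`. When `v i ∈ V i`
for all `i ∈ I`, this is the tangent cone of `∑ i ∈ I, convexHull 𝕜 (V i)` at `∑ i ∈ I, v i`. -/
def tangentConeSum (V : ι → Finset E) (v : ι → E) (I : Finset ι) : PointedCone 𝕜 E :=
  PointedCone.hull 𝕜 (⋃ i ∈ I, (· - v i) '' V i)

namespace tangentConeSum

variable {V : ι → Finset E} {v v' : ι → E} {I I' : Finset ι}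

lemma sub_mem {i : ι} (hi : i ∈ I) {x : E} (hx : x ∈ V i) : x - v i ∈ tangentConeSum 𝕜 V v I :=
  PointedCone.subset_hull (Set.mem_biUnion hi (Set.mem_image_of_mem _ hx))

lemma le_iff {C : PointedCone 𝕜 E} :
    tangentConeSum 𝕜 V v I ≤ C ↔ ∀ i ∈ I, ∀ x ∈ V i, x - v i ∈ C := by
  simp only [tangentConeSum, Submodule.span_le, Set.iUnion₂_subset_iff, Set.image_subset_iff]
  rfl

lemma mono (hII' : I ⊆ I') (hv : ∀ i ∈ I, v i = v' i) :
    tangentConeSum 𝕜 V v I ≤ tangentConeSum 𝕜 V v' I' :=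
  le_iff.2 fun i hi _ hx => hv i hi ▸ sub_mem (hII' hi) hx

lemma smul_sub_mem {i : ι} (hi : i ∈ I) {x y : E} (hx : x ∈ V i) (hy : y ∈ V i) {a : 𝕜}
    (hv : v i = if 0 < a then y else x) : a • (x - y) ∈ tangentConeSum 𝕜 V v I := by
  split_ifs at hv with ha
  · exact PointedCone.smul_mem _ ha.le (hv ▸ sub_mem hi hx)
  · rw [← neg_smul_neg, neg_sub]
    exact PointedCone.smul_mem _ (neg_nonneg.2 (not_lt.1 ha)) (hv ▸ sub_mem hi hy)

theorem exists_coeff_forall_le_lineal {T : Finset ι} {d : ι → E}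
    (h : ∀ i ∈ I, ∀ x ∈ V i, x - v i ∈ (tangentConeSum 𝕜 V v I).lineal ⊔
      Submodule.span 𝕜 (d '' (T : Set ι))) :
    ∃ a : ι → 𝕜, ∀ C : PointedCone 𝕜 E, tangentConeSum 𝕜 V v I ≤ C → (∀ i ∈ T, a i • d i ∈ C) →
      tangentConeSum 𝕜 V v I ≤ C.lineal ∧ ∀ i ∈ T, a i • d i ∈ C.lineal := by
  classical
  have hgens : tangentConeSum 𝕜 V v I =
      PointedCone.hull 𝕜 (I.biUnion fun i => (V i).image (· - v i) : Set E) := by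
    simp only [tangentConeSum, coe_biUnion, coe_image, mem_coe]
  rw [hgens] at h ⊢
  refine exists_coeff_forall_hull_le_lineal fun g hg => ?_
  simp only [mem_biUnion, mem_image] at hg
  obtain ⟨i, hi, x, hx, rfl⟩ := hg
  exact h i hi x hx

lemma exists_le_lineal_union [DecidableEq ι] {x y : ι → E} {S : Finset ι}
    (hIS : Disjoint I S) (hx : ∀ i ∈ S, x i ∈ V i) (hy : ∀ i ∈ S, y i ∈ V i)
    (hspan : ∀ i ∈ I, ∀ b ∈ V i, b - v i ∈ (tangentConeSum 𝕜 V v I).lineal ⊔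
      Submodule.span 𝕜 ((x - y) '' (S : Set ι))) :
    ∃ T ⊆ S, ∃ w : ι → E, (∀ i ∈ I, w i = v i) ∧ (∀ i ∈ T, w i ∈ V i) ∧
      tangentConeSum 𝕜 V v I ≤ (tangentConeSum 𝕜 V w (I ∪ T)).lineal ∧
      ∀ i ∈ T, x i - y i ∈ (tangentConeSum 𝕜 V w (I ∪ T)).lineal := by
  obtain ⟨a, ha⟩ := exists_coeff_forall_le_lineal hspan
  set T := S.filter fun i => a i ≠ 0
  have hTS : T ⊆ S := filter_subset _ _
  set w : ι → E := T.piecewise (fun i => if 0 < a i then y i else x i) v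
  have hwI : ∀ i ∈ I, w i = v i := fun i hi =>
    piecewise_eq_of_notMem _ _ _ fun hiT => disjoint_left.1 hIS hi (hTS hiT)
  have hwT : ∀ i ∈ T, w i = if 0 < a i then y i else x i :=
    fun i hi => piecewise_eq_of_mem _ _ _ hi
  obtain ⟨hIC, haC⟩ := ha (tangentConeSum 𝕜 V w (I ∪ T))
    (mono subset_union_left fun i hi => (hwI i hi).symm) fun i hi => by
      by_cases hai : a i = 0
      · simp [hai]
      · have hiT : i ∈ T := mem_filter.2 ⟨hi, hai⟩
        exact smul_sub_mem (mem_union_right _ hiT) (hx i hi) (hy i hi) (hwT i hiT)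
  refine ⟨T, hTS, w, hwI, fun i hi => ?_, hIC, fun i hi => ?_⟩
  · rw [hwT i hi]
    split_ifs
    exacts [hy i (hTS hi), hx i (hTS hi)]
  · exact (Submodule.smul_mem_iff _ (mem_filter.1 hi).2).1 (haC i (hTS hi))

theorem exists_le_lineal [DecidableEq ι] {x y : ι → E} {S : Finset ι}
    (hIS : Disjoint I S)
    (hv : ∀ i ∈ I, v i ∈ V i) (hx : ∀ i ∈ S, x i ∈ V i) (hy : ∀ i ∈ S, y i ∈ V i)
    (hspan : ∀ i ∈ I ∪ S, ∀ a ∈ V i, ∀ b ∈ V i, a - b ∈ (tangentConeSum 𝕜 V v I).lineal ⊔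
      Submodule.span 𝕜 ((x - y) '' (S : Set ι))) :
    ∃ I', I ⊆ I' ∧ I' ⊆ I ∪ S ∧ ∃ v' : ι → E, (∀ i ∈ I', v' i ∈ V i) ∧
      tangentConeSum 𝕜 V v' I' ≤ (tangentConeSum 𝕜 V v' I').lineal := by
  induction S using Finset.strongInduction generalizing I v with
  | _ S ih =>
  obtain ⟨T, hTS, w, hwI, hwT, hIC, hTC⟩ := exists_le_lineal_union hIS hx hy fun i hi b hb =>
    hspan i (mem_union_left _ hi) b hb (v i) (hv i hi)
  rcases T.eq_empty_or_nonempty with rfl | hne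
  · rw [union_empty] at hIC
    exact ⟨I, subset_rfl, subset_union_left, w, fun i hi => hwI i hi ▸ hv i hi,
      (mono subset_rfl hwI).trans hIC⟩
  have hwV : ∀ i ∈ I ∪ T, w i ∈ V i := fun i hi =>
    (mem_union.1 hi).elim (fun hi => hwI i hi ▸ hv i hi) (hwT i)
  have hle : (tangentConeSum 𝕜 V v I).lineal ⊔ Submodule.span 𝕜 ((x - y) '' (S : Set ι)) ≤
      (tangentConeSum 𝕜 V w (I ∪ T)).lineal ⊔
        Submodule.span 𝕜 ((x - y) '' (↑(S \ T) : Set ι)) := by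
    refine sup_le (le_sup_of_le_left fun z hz => hIC hz.1) (Submodule.span_le.2 ?_)
    rintro _ ⟨i, hi, rfl⟩
    by_cases hiT : i ∈ T
    · exact Submodule.mem_sup_left (hTC i hiT)
    · exact Submodule.mem_sup_right (Submodule.subset_span ⟨i, mem_sdiff.2 ⟨hi, hiT⟩, rfl⟩)
  have hIT : I ∪ T ∪ S \ T = I ∪ S := by rw [union_assoc, union_sdiff_of_subset hTS]
  have hdisj : Disjoint (I ∪ T) (S \ T) :=
    disjoint_union_left.2 ⟨hIS.mono_right sdiff_subset, disjoint_sdiff⟩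
  obtain ⟨I', hII', hI'S, v', hv', hlin⟩ := ih (S \ T) (sdiff_ssubset hTS hne) hdisj hwV
    (fun i hi => hx i (sdiff_subset hi)) (fun i hi => hy i (sdiff_subset hi))
    fun i hi a ha b hb => hle (hspan i (hIT ▸ hi) a ha b hb)
  exact ⟨I', subset_union_left.trans hII', hIT ▸ hI'S, v', hv', hlin⟩

theorem exists_le_lineal_of_finrank_lt {s : Finset ι} (hV : ∀ i ∈ s, (V i).Nonempty)
    (hs : Module.finrank 𝕜 (vectorSpan 𝕜 (∑ i ∈ s, (V i : Set E))) < #s) :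
    ∃ I ⊆ s, I.Nonempty ∧ ∃ v : ι → E, (∀ i ∈ I, v i ∈ V i) ∧
      tangentConeSum 𝕜 V v I ≤ (tangentConeSum 𝕜 V v I).lineal := by
  classical
  have hrank : (s.biUnion fun i => V i - V i : Set E).finrank 𝕜 < #s := by
    have : FiniteDimensional 𝕜 (vectorSpan 𝕜 (∑ i ∈ s, (V i : Set E))) := by
      rw [← coe_sum]
      exact finiteDimensional_vectorSpan_of_finite 𝕜 (finite_toSet _)
    refine (Submodule.finrank_mono (Submodule.span_le.2 fun g hg => ?_)).trans_lt hs
    obtain ⟨i, hi, hg⟩ := mem_biUnion.1 hg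
    obtain ⟨a, ha, b, hb, rfl⟩ := mem_sub.1 hg
    exact sub_mem_vectorSpan_sum (fun i hi => coe_nonempty.2 (hV i hi)) hi ha hb
  obtain ⟨J, hJs, j₀, hj₀, d, hd, hspan⟩ := exists_transversal_span_of_finrank_lt hrank
  have hd' : ∀ i ∈ J.erase j₀, ∃ x ∈ V i, ∃ y ∈ V i, x - y = d i := fun i hi => mem_sub.1 (hd i hi)
  choose! x hx y hy hxy using hd'
  obtain ⟨z, hz⟩ := hV j₀ (hJs hj₀)
  have hunion : {j₀} ∪ J.erase j₀ = J := by rw [← insert_eq, insert_erase hj₀]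
  have himage : (x - y) '' (J.erase j₀ : Set ι) = d '' (J.erase j₀ : Set ι) :=
    Set.image_congr hxy
  obtain ⟨I, hI, hIJ, v, hv, hlin⟩ := exists_le_lineal (𝕜 := 𝕜) (v := fun _ => z)
    (disjoint_singleton_left.2 (notMem_erase j₀ J)) (by simpa using hz) hx hy
    fun i hi a ha b hb => by
      rw [himage]
      exact Submodule.mem_sup_right (hspan i (hunion ▸ hi) (sub_mem_sub ha hb))
  exact ⟨I, (hIJ.trans hunion.subset).trans hJs, (singleton_nonempty j₀).mono hI, v, hv, hlin⟩

lemma sub_sum_mem {x : E} (hx : x ∈ ∑ i ∈ I, convexHull 𝕜 (V i : Set E)) :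
    x - ∑ i ∈ I, v i ∈ tangentConeSum 𝕜 V v I := by
  obtain ⟨q, hq, rfl⟩ := (Set.mem_finsetSum _ _ _).1 hx
  rw [← sum_sub_distrib]
  refine sum_mem fun i hi => ?_
  have hconvex : Convex 𝕜 {z | z - v i ∈ tangentConeSum 𝕜 V v I} := by
    simpa only [sub_eq_add_neg, Set.preimage, SetLike.mem_coe] using
      (PointedCone.convex _).translate_preimage_left (-v i)
  have hV : (V i : Set E) ⊆ {z | z - v i ∈ tangentConeSum 𝕜 V v I} := fun _ hz => sub_mem hi hz
  exact convexHull_min hV hconvex (hq hi)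

lemma exists_pos_sum_add_smul_mem (hv : ∀ i ∈ I, v i ∈ V i) {x : E}
    (hx : x ∈ tangentConeSum 𝕜 V v I) :
    ∃ r : 𝕜, 0 < r ∧ ∑ i ∈ I, v i + r • x ∈ ∑ i ∈ I, convexHull 𝕜 (V i : Set E) := by
  classical
  have hmem {w : ι → E} (hw : ∀ i ∈ I, w i ∈ V i) :
      ∑ i ∈ I, w i ∈ ∑ i ∈ I, convexHull 𝕜 (V i : Set E) :=
    Set.finsetSum_mem_finsetSum _ _ _ fun i hi => subset_convexHull 𝕜 _ (hw i hi)
  refine exists_pos_add_smul_mem_of_mem_hull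
    (convex_sum _ fun i _ => convex_convexHull 𝕜 _) (hmem hv) (fun g hg => ?_) hx
  obtain ⟨i, hi, y, hy, rfl⟩ := Set.mem_iUnion₂.1 hg
  have hupdate : ∑ j ∈ I, v j + (y - v i) = ∑ j ∈ I, Function.update v i y j := by
    rw [sum_update_of_mem hi, sdiff_singleton_eq_erase, ← add_sum_erase I v hi]
    abel
  simp only [hupdate]
  refine hmem fun j hj => ?_
  rcases eq_or_ne j i with rfl | hji
  · rwa [Function.update_self]
  · rw [Function.update_of_ne hji]
    exact hv j hj

end tangentConeSum

end Cone

section IntrinsicInterior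

variable {E : Type*} [AddCommGroup E] [TopologicalSpace E] [IsTopologicalAddGroup E] [Module ℝ E]
  [ContinuousSMul ℝ E] {Q : Set E}

-- The homothety with centre `z` and ratio `t > 0` is an open self-map of the affine span of `Q`.
lemma mem_intrinsicInterior_of_mem_openSegment (hQ : Convex ℝ Q) {y z p : E}
    (hy : y ∈ intrinsicInterior ℝ Q) (hz : z ∈ Q) (hp : p ∈ openSegment ℝ z y) :
    p ∈ intrinsicInterior ℝ Q := by
  obtain ⟨y, hy, rfl⟩ := hy
  rw [openSegment_eq_image_lineMap] at hp
  obtain ⟨t, ⟨ht₀, ht₁⟩, rfl⟩ := hp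
  have : Nonempty (affineSpan ℝ Q) := ⟨y⟩
  set c : affineSpan ℝ Q := ⟨z, subset_affineSpan ℝ Q hz⟩
  set B : Set (affineSpan ℝ Q) := (↑) ⁻¹' Q
  have hmaps : AffineMap.homothety c t '' B ⊆ B := by
    rintro _ ⟨x, hx, rfl⟩
    exact hQ.lineMap_mem hz hx ⟨ht₀.le, ht₁.le⟩
  refine ⟨AffineMap.homothety c t y, interior_mono hmaps ?_, rfl⟩
  exact (AffineMap.homothety_isOpenMap c t ht₀.ne').image_interior_subset B ⟨y, hy, rfl⟩

end IntrinsicInterior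

section FiniteDimensional

variable {ι E : Type*} [NormedAddCommGroup E] [NormedSpace ℝ E] [FiniteDimensional ℝ E]

lemma mem_intrinsicInterior_of_forall_exists_pos {Q : Set E} (hQ : Convex ℝ Q) {p : E}
    (hp : p ∈ Q) (h : ∀ x ∈ Q, ∃ r : ℝ, 0 < r ∧ p + r • (p - x) ∈ Q) :
    p ∈ intrinsicInterior ℝ Q := by
  obtain ⟨y, hy⟩ := Set.Nonempty.intrinsicInterior hQ ⟨p, hp⟩
  obtain ⟨r, hr, hz⟩ := h y (intrinsicInterior_subset hy)
  refine mem_intrinsicInterior_of_mem_openSegment hQ hy hz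
    (mem_openSegment_iff_div.2 ⟨1, r, one_pos, hr, ?_⟩)
  match_scalars <;> field

lemma sum_mem_intrinsicInterior_of_tangentConeSum_le_lineal {V : ι → Finset E} {v : ι → E}
    {I : Finset ι} (hv : ∀ i ∈ I, v i ∈ V i)
    (h : tangentConeSum ℝ V v I ≤ (tangentConeSum ℝ V v I).lineal) :
    ∑ i ∈ I, v i ∈ intrinsicInterior ℝ (∑ i ∈ I, convexHull ℝ (V i : Set E)) := by
  have hmem : ∑ i ∈ I, v i ∈ ∑ i ∈ I, convexHull ℝ (V i : Set E) :=
    Set.finsetSum_mem_finsetSum _ _ _ fun i hi => subset_convexHull ℝ _ (hv i hi)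
  refine mem_intrinsicInterior_of_forall_exists_pos
    (convex_sum _ fun i _ => convex_convexHull ℝ _) hmem fun x hx => ?_
  rw [← neg_sub]
  exact tangentConeSum.exists_pos_sum_add_smul_mem hv (h (tangentConeSum.sub_sum_mem hx)).2

theorem exists_sum_mem_intrinsicInterior_sum_convexHull {V : ι → Finset E} {s : Finset ι}
    (hV : ∀ i ∈ s, (V i).Nonempty)
    (hs : Module.finrank ℝ (vectorSpan ℝ (∑ i ∈ s, (V i : Set E))) < #s) :
    ∃ I ⊆ s, I.Nonempty ∧ ∃ v : ι → E, (∀ i ∈ I, v i ∈ V i) ∧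
      ∑ i ∈ I, v i ∈ intrinsicInterior ℝ (∑ i ∈ I, convexHull ℝ (V i : Set E)) := by
  obtain ⟨I, hIs, hI, v, hv, hlin⟩ := tangentConeSum.exists_le_lineal_of_finrank_lt hV hs
  exact ⟨I, hIs, hI, v, hv, sum_mem_intrinsicInterior_of_tangentConeSum_le_lineal hv hlin⟩

end FiniteDimensional

lemma isLatticePt_sum {ι : Type*} {n : ℕ} {s : Finset ι} {v : ι → Fin n → ℝ}
    (hv : ∀ i ∈ s, IsLatticePt (v i)) : IsLatticePt (∑ i ∈ s, v i) := by
  intro k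
  have hint : ∀ i ∈ s, ∃ z : ℤ, v i k = z := fun i hi => hv i hi k
  choose! z hz using hint
  exact ⟨∑ i ∈ s, z i, by rw [Finset.sum_apply, sum_congr rfl hz, Int.cast_sum]⟩

theorem exists_relint_lattice_point_of_proper_general {n : ℕ} {ι : Type*} {s : Finset ι}
    {P : ι → Set (Fin n → ℝ)} (hP : ∀ i ∈ s, IsLatticePolytope (P i))
    (hdim : adim (∑ i ∈ s, P i) < #s) :
    ∃ I ⊆ s, I.Nonempty ∧ (relintLat (∑ i ∈ I, P i)).Nonempty := by
  choose! V hV hlattice hPV using hP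
  have hsum {I : Finset ι} (hI : I ⊆ s) :
      ∑ i ∈ I, P i = ∑ i ∈ I, convexHull ℝ (V i : Set (Fin n → ℝ)) :=
    sum_congr rfl fun i hi => hPV i (hI hi)
  rw [hsum subset_rfl, ← convexHull_sum, adim, affineSpan_convexHull, direction_affineSpan] at hdim
  obtain ⟨I, hIs, hI, v, hv, hmem⟩ := exists_sum_mem_intrinsicInterior_sum_convexHull hV hdim
  refine ⟨I, hIs, hI, ∑ i ∈ I, v i, (hsum hIs).symm ▸ hmem, ?_⟩
  exact isLatticePt_sum fun i hi => hlattice i (hIs hi) _ (hv i hi)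

/-- nonnegativity of the mixed degree of a proper family of n+1
lattice polytopes in ℝ^n: some Minkowski subsum has a relative interior lattice point. -/
theorem exists_relint_lattice_point_of_proper {n : ℕ}
    (P : Fin (n + 1) → Set (Fin n → ℝ)) (hP : ∀ i, IsLatticePolytope (P i))
    (hdim : ∀ i, 1 ≤ adim (P i)) (hsum : adim (∑ i, P i) = n) :
    ∃ I : Finset (Fin (n + 1)), I.Nonempty ∧ (relintLat (∑ i ∈ I, P i)).Nonempty := by
  obtain ⟨I, -, h⟩ := exists_relint_lattice_point_of_proper_general (s := univ)
    (fun i _ => hP i) (by simp [hsum])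
  exact ⟨I, h⟩
end

section
/- Let P_1, ..., P_n be lattice polytopes in R^n with each P_i full-dimensional. If the Minkowski sum P_1 + ... + P_n has no interior lattice point, then MV(P_1,...,P_n) = 1. -/
open scoped Pointwise
open MeasureTheory Finset

/-!
The number of lattice points of `∑ i, k i • P i` is a polynomial in `k`. Its alternating sum along
the diagonals of the faces of the orthant is divisible by `N ^ n` and grows like
`mixedVol P * N ^ n`, hence equals `mixedVol P * N ^ n` exactly. At `N = -1` only the term of the
empty face, which is `(-1) ^ n`, survives, because the Ehrhart polynomial of a lattice polytope
without relative interior lattice points vanishes at `-1`.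

Both facts about lattice point counts come from inclusion-exclusion over the subsets `J` of the
vertices `v`: a point of `R + T • P` belongs to `∑ j ∈ J, v j + (R + (T - #J) • P)` if and only if
it has a representation in which the vertices in `J` have weight at least `1`. These representations
form compact convex sets, one for every `J`, and the Euler characteristic turns inclusion-exclusion
for the representations into inclusion-exclusion for the points.
-/

section EulerRelation

open Filter Topology

theorem eventually_nhdsGT_mem_iff {α : Type*} [LinearOrder α] [TopologicalSpace α]
    [OrderTopology α] {C : Set α} (hC : IsCompact C) (hC' : C.OrdConnected) (t : α) :
    ∀ᶠ r in 𝓝[>] t, (r ∈ C ↔ t ∈ C ∧ ¬ IsGreatest C t) := by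
  by_cases ht : t ∈ C
  · obtain ⟨b, hb⟩ := hC.exists_isGreatest ⟨t, ht⟩
    rcases (hb.2 ht).eq_or_lt with rfl | htb
    · filter_upwards [self_mem_nhdsWithin] with r hr
      exact iff_of_false (fun hrC => (hb.2 hrC).not_gt hr) fun h => h.2 hb
    · filter_upwards [Ioc_mem_nhdsGT htb] with r hr
      exact iff_of_true (hC'.out ht hb.1 ⟨hr.1.le, hr.2⟩) ⟨ht, fun h => (h.2 hb.1).not_gt htb⟩
  · filter_upwards [mem_nhdsWithin_of_mem_nhds (hC.isClosed.isOpen_compl.mem_nhds ht)] with r hr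
    exact iff_of_false hr fun h => ht h.1

variable {ι M E F : Type*} [AddCommGroup M] {s : Finset ι} {a : ι → M}

open scoped Classical in
/-- The property of a space `E` that the Euler characteristic (equal to `1` on nonempty compact
convex sets) respects every relation `∑ i ∈ s, a i • 1_{C i} = 0` between the indicator functions
of compact convex sets `C i ⊆ E`. -/
def EulerRelation (s : Finset ι) (a : ι → M) (E : Type*) [AddCommGroup E] [Module ℝ E]
    [TopologicalSpace E] : Prop :=
  ∀ C : ι → Set E, (∀ i, IsCompact (C i)) → (∀ i, Convex ℝ (C i)) →
    (∀ x, ∑ i ∈ s with x ∈ C i, a i = 0) → ∑ i ∈ s with (C i).Nonempty, a i = 0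

namespace EulerRelation

-- A jump of `∑ i ∈ s, a i • 1_{C i}` when passing to the right of `t` is the total weight of
-- the intervals ending at `t`, and every nonempty interval has exactly one right end.
protected theorem real : EulerRelation s a ℝ := by
  classical
  intro C hC hC' h
  have sum_isGreatest (t : ℝ) : ∑ i ∈ s with IsGreatest (C i) t, a i = 0 := by
    obtain ⟨r, hr⟩ := ((eventually_all_finset s).2 fun i _ =>
      eventually_nhdsGT_mem_iff (hC i) (hC' i).ordConnected t).exists
    have split := sum_filter_add_sum_filter_not {i ∈ s | t ∈ C i} (fun i => IsGreatest (C i) t) a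
    rw [h, filter_filter, filter_filter, ← filter_congr hr, h, add_zero] at split
    rwa [filter_congr fun i _ => (and_iff_right_of_imp fun hi => hi.1 :
      t ∈ C i ∧ IsGreatest (C i) t ↔ IsGreatest (C i) t)] at split
  rw [← sum_fiberwise_of_maps_to (t := s.image fun i => sSup (C i)) fun i hi =>
    mem_image_of_mem _ (mem_filter.1 hi).1]
  refine sum_eq_zero fun t _ => ?_
  rw [filter_filter, ← sum_isGreatest t]
  congr 1
  refine filter_congr fun i _ => ⟨?_, fun hi => ⟨⟨t, hi.1⟩, hi.csSup_eq⟩⟩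
  rintro ⟨hne, rfl⟩
  exact (hC i).isGreatest_sSup hne

variable [AddCommGroup E] [Module ℝ E] [TopologicalSpace E]
  [AddCommGroup F] [Module ℝ F] [TopologicalSpace F]

theorem of_subsingleton [Subsingleton E] : EulerRelation s a E := by
  classical
  intro C _ _ h
  rw [← h 0]
  congr 1
  exact filter_congr fun i _ => ⟨fun ⟨x, hx⟩ => Subsingleton.elim x 0 ▸ hx, fun hx => ⟨0, hx⟩⟩

protected theorem prod [T1Space E] (hE : EulerRelation s a E) (hF : EulerRelation s a F) :
    EulerRelation s a (E × F) := by
  classical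
  intro C hC hC' h
  let fiber (x : E) (i : ι) : Set F := Prod.snd '' (C i ∩ Prod.fst ⁻¹' {x})
  have mem_fiber {x y i} : y ∈ fiber x i ↔ (x, y) ∈ C i := by
    simp [fiber]
  have fiber_nonempty {x i} : (fiber x i).Nonempty ↔ x ∈ Prod.fst '' C i := by
    simp [Set.Nonempty, mem_fiber]
  simp only [← Set.image_nonempty (f := Prod.fst) (s := C _)]
  refine hE _ (fun i => (hC i).image continuous_fst)
    (fun i => (hC' i).linear_image (LinearMap.fst ℝ E F)) fun x => ?_
  simp only [← fiber_nonempty]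
  refine hF (fiber x) (fun i => ?_) (fun i => ?_) fun y => ?_
  · exact ((hC i).inter_right (isClosed_singleton.preimage continuous_fst)).image continuous_snd
  · exact ((hC' i).inter ((convex_singleton x).linear_preimage
      (LinearMap.fst ℝ E F))).linear_image (LinearMap.snd ℝ E F)
  · simpa only [mem_fiber] using h (x, y)

theorem of_continuousLinearEquiv (e : E ≃L[ℝ] F) (hE : EulerRelation s a E) :
    EulerRelation s a F := by
  classical
  intro C hC hC' h
  have := hE (fun i => e ⁻¹' C i) (fun i => e.toHomeomorph.isCompact_preimage.2 (hC i))
    (fun i => (hC' i).linear_preimage e.toLinearMap) fun x => h (e x)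
  simpa only [e.surjective.nonempty_preimage] using this

protected theorem pi_fin : ∀ d : ℕ, EulerRelation s a (Fin d → ℝ)
  | 0 => of_subsingleton
  | d + 1 => of_continuousLinearEquiv (Fin.consEquivL ℝ fun _ => ℝ)
      (EulerRelation.real.prod (EulerRelation.pi_fin d))

theorem of_finiteDimensional [IsTopologicalAddGroup E] [ContinuousSMul ℝ E] [T2Space E]
    [FiniteDimensional ℝ E] : EulerRelation s a E :=
  of_continuousLinearEquiv
    (ContinuousLinearEquiv.ofFinrankEq (Module.finrank_fin_fun (R := ℝ)))
    (EulerRelation.pi_fin (Module.finrank ℝ E))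

end EulerRelation

end EulerRelation

section WeightCell

variable {κ E : Type*} [Fintype κ] [AddCommGroup E] [Module ℝ E]

theorem convexHull_range_eq_image_stdSimplex (v : κ → E) :
    convexHull ℝ (Set.range v) = Fintype.linearCombination ℝ v '' stdSimplex ℝ κ := by
  classical
  rw [← convexHull_rangle_single_eq_stdSimplex, LinearMap.image_convexHull, ← Set.range_comp]
  congr 2
  ext j
  simp

theorem mem_smul_convexHull_range_iff [Nonempty κ] {v : κ → E} {c : ℝ} (hc : 0 ≤ c) {y : E} :
    y ∈ c • convexHull ℝ (Set.range v) ↔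
      ∃ m : κ → ℝ, 0 ≤ m ∧ ∑ j, m j = c ∧ Fintype.linearCombination ℝ v m = y := by
  rw [convexHull_range_eq_image_stdSimplex, ← image_smul_set]
  refine exists_congr fun m => Iff.trans (and_congr_left fun _ => ?_) and_assoc
  constructor
  · rintro ⟨w, ⟨hw, hw1⟩, rfl⟩
    exact ⟨smul_nonneg hc hw, by simp [← mul_sum, hw1]⟩
  · classical
    rintro ⟨hm, hmc⟩
    rcases hc.eq_or_lt with rfl | hc
    · have hm0 : m = 0 := (Fintype.sum_eq_zero_iff_of_nonneg hm).1 hmc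
      rw [hm0, Set.zero_smul_set ⟨_, single_mem_stdSimplex ℝ (Classical.arbitrary κ)⟩]
      rfl
    · rw [Set.mem_smul_set_iff_inv_smul_mem₀ hc.ne']
      exact ⟨smul_nonneg (inv_nonneg.2 hc.le) hm, by simp [← mul_sum, hmc, hc.ne']⟩

/-- The ways to write `x` as a point of `R` plus a combination of the vectors `v` with nonnegative
weights of total `T`, where moreover the weights of all vectors in `J` are at least `1`. -/
def weightCell (v : κ → E) (R : Set E) (T : ℝ) (x : E) (J : Finset κ) : Set (κ → ℝ) :=
  {l | 0 ≤ l ∧ (∀ j ∈ J, 1 ≤ l j) ∧ ∑ j, l j = T ∧ x - Fintype.linearCombination ℝ v l ∈ R}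

variable {v : κ → E} {R : Set E} {T : ℝ} {x : E} {J : Finset κ} {l : κ → ℝ}

theorem mem_weightCell_iff : l ∈ weightCell v R T x J ↔
    l ∈ weightCell v R T x ∅ ∧ ∀ j ∈ J, 1 ≤ l j := by
  simp only [weightCell, Set.mem_ofPred_eq, notMem_empty, false_imp_iff, implies_true, true_and]
  tauto

theorem mem_weightCell_iff_indicator_le : l ∈ weightCell v R T x J ↔
    (J : Set κ).indicator 1 ≤ l ∧ ∑ j, l j = T ∧ x - Fintype.linearCombination ℝ v l ∈ R := by
  rw [weightCell, Set.mem_ofPred_eq, ← and_assoc]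
  refine and_congr_left fun _ => ⟨fun h => Set.indicator_le' h.2 fun j _ => h.1 j, fun h => ?_⟩
  refine ⟨le_trans (Set.indicator_nonneg fun _ _ => zero_le_one) h, fun j hj => ?_⟩
  simpa [hj] using h j

theorem weightCell_nonempty_iff [Nonempty κ] : (weightCell v R T x J).Nonempty ↔
    (#J : ℝ) ≤ T ∧ x ∈ (∑ j ∈ J, v j) +ᵥ (R + (T - #J) • convexHull ℝ (Set.range v)) := by
  have sum_indicator : ∑ j, (J : Set κ).indicator (1 : κ → ℝ) j = #J := by
    classical simp [Set.indicator_apply]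
  have linearCombination_indicator :
      Fintype.linearCombination ℝ v ((J : Set κ).indicator 1) = ∑ j ∈ J, v j := by
    classical simp [Fintype.linearCombination_apply, Set.indicator_apply, ite_smul]
  constructor
  · rintro ⟨l, hl⟩
    obtain ⟨hJl, hlT, hx⟩ := mem_weightCell_iff_indicator_le.1 hl
    have hJT : (#J : ℝ) ≤ T := by
      rw [← sum_indicator, ← hlT]
      exact sum_le_sum fun j _ => hJl j
    refine ⟨hJT, Set.mem_vadd_set.2 ⟨_, Set.add_mem_add hx
      ((mem_smul_convexHull_range_iff (sub_nonneg.2 hJT)).2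
        ⟨l - (J : Set κ).indicator 1, sub_nonneg.2 hJl, ?_, rfl⟩), ?_⟩⟩
    · simp only [Pi.sub_apply, sum_sub_distrib, hlT, sum_indicator]
    · rw [map_sub, linearCombination_indicator, vadd_eq_add]
      abel
  · rintro ⟨hJT, _, ⟨r, hr, y, hy, rfl⟩, rfl⟩
    obtain ⟨m, hm, hmT, rfl⟩ := (mem_smul_convexHull_range_iff (sub_nonneg.2 hJT)).1 hy
    refine ⟨m + (J : Set κ).indicator 1, mem_weightCell_iff_indicator_le.2
      ⟨le_add_of_nonneg_left hm, ?_, ?_⟩⟩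
    · simp only [Pi.add_apply, sum_add_distrib, hmT, sum_indicator, sub_add_cancel]
    · convert hr using 1
      simp only [map_add, linearCombination_indicator, vadd_eq_add]
      abel

theorem convex_weightCell (hR : Convex ℝ R) : Convex ℝ (weightCell v R T x J) := by
  intro l hl m hm a b ha hb hab
  rw [mem_weightCell_iff_indicator_le] at *
  refine ⟨convex_Ici (𝕜 := ℝ) (r := (J : Set κ).indicator (1 : κ → ℝ)) hl.1 hm.1 ha hb hab, ?_, ?_⟩
  · simp only [Pi.add_apply, Pi.smul_apply, sum_add_distrib, ← smul_sum, hl.2.1, hm.2.1,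
      ← add_smul, hab, one_smul]
  · convert hR hl.2.2 hm.2.2 ha hb hab using 1
    rw [map_add, map_smul, map_smul, smul_sub, smul_sub, sub_add_sub_comm, ← add_smul, hab,
      one_smul]

theorem isCompact_weightCell [TopologicalSpace E] [IsTopologicalAddGroup E] [ContinuousSMul ℝ E]
    (hR : IsClosed R) : IsCompact (weightCell v R T x J) := by
  refine (isCompact_Icc (a := 0) (b := fun _ => T)).of_isClosed_subset ?_
    fun l ⟨hl, _, hlT, _⟩ => ⟨hl, fun j => hlT ▸ single_le_sum (fun i _ => hl i) (mem_univ j)⟩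
  simp only [weightCell, Fintype.linearCombination_apply]
  simp only [Set.ofPred_and, Set.ofPred_forall]
  exact isClosed_Ici.inter ((isClosed_biInter fun j _ =>
    isClosed_le continuous_const (continuous_apply j)).inter
    ((isClosed_eq (by fun_prop) continuous_const).inter (hR.preimage (by fun_prop))))

open scoped Classical in
theorem sum_neg_one_pow_card_weightCell_nonempty [TopologicalSpace E] [IsTopologicalAddGroup E]
    [ContinuousSMul ℝ E] (hR : IsClosed R) (hR' : Convex ℝ R)
    (h : ∀ l ∈ weightCell v R T x ∅, ∃ j, 1 ≤ l j) :
    ∑ J : Finset κ with (weightCell v R T x J).Nonempty, (-1 : ℤ) ^ #J = 0 := by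
  refine EulerRelation.of_finiteDimensional _ (fun _ => isCompact_weightCell hR)
    (fun _ => convex_weightCell hR') fun l => ?_
  by_cases hl : l ∈ weightCell v R T x ∅
  · obtain ⟨j, hj⟩ := h l hl
    have filter_eq : ({J | l ∈ weightCell v R T x J} : Finset (Finset κ)) =
        powerset {j | 1 ≤ l j} := by
      ext J
      simp [mem_weightCell_iff (J := J), hl, subset_iff]
    rw [filter_eq]
    exact sum_powerset_neg_one_pow_card_of_nonempty ⟨j, by simpa using hj⟩
  · exact sum_eq_zero fun J hJ => absurd (mem_weightCell_iff.1 (mem_filter.1 hJ).2).1 hl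

end WeightCell

section IntrinsicInterior

variable {κ E : Type*} [Fintype κ] [NormedAddCommGroup E] [NormedSpace ℝ E]

theorem intrinsicInterior_subset_interior {A : Set E} (h : (interior A).Nonempty) :
    intrinsicInterior ℝ A ⊆ interior A := by
  have isOpen_span : IsOpen (affineSpan ℝ A : Set E) := by
    rw [affineSpan_eq_top_of_nonempty_interior (h.mono (interior_mono (subset_convexHull ℝ A)))]
    exact isOpen_univ
  exact interior_maximal intrinsicInterior_subset
    (isOpen_span.isOpenMap_subtype_val _ isOpen_interior)

theorem combo_intrinsicInterior_self_mem_intrinsicInterior {s : Set E} (hs : Convex ℝ s) {x y : E}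
    (hx : x ∈ intrinsicInterior ℝ s) (hy : y ∈ s) {a b : ℝ} (ha : 0 < a) (hb : 0 ≤ b)
    (hab : a + b = 1) : a • x + b • y ∈ intrinsicInterior ℝ s := by
  obtain ⟨x, hx, rfl⟩ := hx
  let y' : affineSpan ℝ s := ⟨y, subset_affineSpan ℝ s hy⟩
  have : Nonempty (affineSpan ℝ s) := ⟨y'⟩
  have coe_homothety (z : affineSpan ℝ s) :
      (AffineMap.homothety y' a z : E) = a • (z : E) + b • y := by
    rw [← eq_sub_iff_add_eq'] at hab
    simp only [y', AffineMap.homothety_apply, AffineSubspace.coe_vadd, Submodule.coe_smul,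
      AffineSubspace.coe_vsub, vsub_eq_sub, vadd_eq_add, hab]
    module
  refine ⟨AffineMap.homothety y' a x, ?_, coe_homothety x⟩
  refine interior_maximal ?_ (AffineMap.homothety_isOpenMap y' a ha.ne' _ isOpen_interior)
    (Set.mem_image_of_mem _ hx)
  rintro _ ⟨z, hz, rfl⟩
  rw [Set.mem_preimage, coe_homothety]
  exact hs (interior_subset hz :) hy ha.le hb hab

theorem linearCombination_mem_intrinsicInterior_convexHull [FiniteDimensional ℝ E] {v : κ → E}
    {m : κ → ℝ} (hm : ∀ j, 0 < m j) (hm1 : ∑ j, m j = 1) :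
    Fintype.linearCombination ℝ v m ∈ intrinsicInterior ℝ (convexHull ℝ (Set.range v)) := by
  have : Nonempty κ := by
    by_contra! hκ
    simp at hm1
  obtain ⟨z, hz⟩ := (Set.range_nonempty v).convexHull.intrinsicInterior (convex_convexHull ℝ _)
  have hz' := intrinsicInterior_subset hz
  rw [convexHull_range_eq_image_stdSimplex] at hz'
  obtain ⟨w, ⟨-, hw1⟩, rfl⟩ := hz'
  obtain ⟨e, hem, he1, he0⟩ : ∃ e : ℝ, (∀ j, e * w j < m j) ∧ e < 1 ∧ 0 < e := by
    refine Filter.Eventually.exists (f := nhdsWithin 0 (Set.Ioi 0)) <|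
      (Filter.eventually_all.2 fun j => ?_).and <|
        (Filter.Eventually.filter_mono nhdsWithin_le_nhds (Iio_mem_nhds one_pos)).and
        self_mem_nhdsWithin
    refine Filter.Eventually.filter_mono nhdsWithin_le_nhds
      (ContinuousAt.eventually_lt (by fun_prop) continuousAt_const ?_)
    simpa using hm j
  obtain ⟨y, hy, hmy⟩ : Fintype.linearCombination ℝ v (m - e • w) ∈
      (1 - e) • convexHull ℝ (Set.range v) := by
    refine (mem_smul_convexHull_range_iff (sub_nonneg.2 he1.le)).2
      ⟨_, fun j => (sub_pos.2 (hem j)).le, ?_, rfl⟩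
    simp [sum_sub_distrib, ← mul_sum, hw1, hm1]
  convert combo_intrinsicInterior_self_mem_intrinsicInterior (convex_convexHull ℝ _) hz hy he0
    (sub_nonneg.2 he1.le) (add_sub_cancel _ _)
  rw [← sub_eq_iff_eq_add', ← map_smul, ← map_sub]
  exact hmy.symm

end IntrinsicInterior

section LatticeCount

variable {ι κ E M : Type*} [Fintype κ] [NormedAddCommGroup E] (L : AddSubgroup E)

/-- The number of points of the subgroup `L` in `A`; it is `0` if there are infinitely many. -/
noncomputable def latticeCount (A : Set E) : ℕ := (A ∩ L).ncard

variable {L}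

theorem latticeCount_vadd {w : E} (hw : w ∈ L) (A : Set E) :
    latticeCount L (w +ᵥ A) = latticeCount L A := by
  have vadd_L : w +ᵥ (L : Set E) = L := vadd_coe_set hw
  rw [latticeCount, latticeCount, ← Set.ncard_vadd_set w (A ∩ L), Set.vadd_set_inter, vadd_L]

theorem latticeCount_singleton_zero : latticeCount L {0} = 1 := by
  simp [latticeCount]

variable [DiscreteTopology L]

open scoped Classical in
theorem sum_latticeCount_smul_eq_zero [ProperSpace E] [AddCommMonoid M] {s : Finset ι} {a : ι → M}
    {A : ι → Set E} (hA : ∀ i ∈ s, Bornology.IsBounded (A i))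
    (h : ∀ x ∈ L, ∑ i ∈ s with x ∈ A i, a i = 0) : ∑ i ∈ s, latticeCount L (A i) • a i = 0 := by
  have finite_union : ((⋃ i ∈ s, A i) ∩ L).Finite :=
    Metric.finite_isBounded_inter_isClosed DiscreteTopology.isDiscrete
      ((Bornology.isBounded_biUnion_finset s).2 hA) AddSubgroup.isClosed_of_discrete
  have latticeCount_eq : ∀ i ∈ s,
      latticeCount L (A i) = #{x ∈ finite_union.toFinset | x ∈ A i} := by
    intro i hi
    rw [latticeCount, ← Set.ncard_coe_finset]
    congr 1
    ext x
    simp only [Set.mem_inter_iff, coe_filter, Set.Finite.mem_toFinset, Set.mem_iUnion₂]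
    exact ⟨fun hx => ⟨⟨⟨i, hi, hx.1⟩, hx.2⟩, hx.1⟩, fun hx => ⟨hx.2, hx.1.2⟩⟩
  rw [sum_congr rfl fun i hi => by rw [latticeCount_eq i hi, ← sum_const, sum_filter], sum_comm]
  refine sum_eq_zero fun x hx => ?_
  rw [← sum_filter]
  exact h x (finite_union.mem_toFinset.1 hx).2

variable [NormedSpace ℝ E] [FiniteDimensional ℝ E] {v : κ → E}

theorem sum_neg_one_pow_mul_latticeCount_of_weightCell [Nonempty κ] (hv : ∀ j, v j ∈ L) {R : Set E}
    (hR : IsCompact R) (hR' : Convex ℝ R) {T : ℕ}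
    (h : ∀ x ∈ L, ∀ l ∈ weightCell v R T x ∅, ∃ j, 1 ≤ l j) :
    ∑ J : Finset κ with #J ≤ T, (-1 : ℤ) ^ #J *
      latticeCount L (R + ((T - #J : ℕ) : ℝ) • convexHull ℝ (Set.range v)) = 0 := by
  classical
  have isCompact_translate (J : Finset κ) : IsCompact
      ((∑ j ∈ J, v j) +ᵥ (R + ((T - #J : ℕ) : ℝ) • convexHull ℝ (Set.range v))) :=
    (hR.add (((Set.finite_range v).isCompact_convexHull ℝ).smul _)).vadd _
  refine Eq.trans (sum_congr rfl fun J _ => ?_) <|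
    sum_latticeCount_smul_eq_zero (L := L) (a := fun J : Finset κ => (-1 : ℤ) ^ #J)
      (fun J _ => (isCompact_translate J).isBounded) fun x hx => ?_
  · rw [latticeCount_vadd (L.sum_mem fun j _ => hv j), nsmul_eq_mul, mul_comm]
  · refine Eq.trans ?_ (sum_neg_one_pow_card_weightCell_nonempty hR.isClosed hR' (h x hx))
    rw [filter_filter]
    refine sum_congr (filter_congr fun J _ => ?_) fun _ _ => rfl
    rw [weightCell_nonempty_iff, Nat.cast_le]
    exact and_congr_right fun hJ => by rw [Nat.cast_sub hJ]

-- Weights smaller than `1` have total less than `#κ`.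
theorem sum_neg_one_pow_mul_latticeCount_add_smul [Nonempty κ] (hv : ∀ j, v j ∈ L) {R : Set E}
    (hR : IsCompact R) (hR' : Convex ℝ R) :
    ∑ J : Finset κ, (-1 : ℤ) ^ #J * latticeCount L
      (R + ((Fintype.card κ - #J : ℕ) : ℝ) • convexHull ℝ (Set.range v)) = 0 := by
  rw [← sum_neg_one_pow_mul_latticeCount_of_weightCell hv hR hR' (T := Fintype.card κ),
    filter_true_of_mem fun J _ => card_le_univ J]
  intro x _ l ⟨_, _, hl, _⟩
  by_contra! hlt
  exact (sum_lt_sum_of_nonempty univ_nonempty fun j _ => hlt j).ne (by simpa using hl)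

-- If `∑ j, l j • v j` lies in `L` with `0 ≤ l j < 1` and total weight `#κ - 1`, then
-- `∑ j, (1 - l j) • v j` is a point of `L` in the relative interior.
theorem sum_neg_one_pow_mul_latticeCount_smul [DecidableEq κ] [Nonempty κ] (hv : ∀ j, v j ∈ L)
    (h : ∀ x ∈ L, x ∉ intrinsicInterior ℝ (convexHull ℝ (Set.range v))) :
    ∑ J : Finset κ with J ≠ univ, (-1 : ℤ) ^ #J * latticeCount L
      (((Fintype.card κ - 1 - #J : ℕ) : ℝ) • convexHull ℝ (Set.range v)) = 0 := by
  have card_le_iff (J : Finset κ) : #J ≤ Fintype.card κ - 1 ↔ J ≠ univ := by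
    rw [Nat.le_sub_one_iff_lt Fintype.card_pos, card_lt_iff_ne_univ]
  have relation := sum_neg_one_pow_mul_latticeCount_of_weightCell hv isCompact_singleton
    (convex_singleton (0 : E)) (T := Fintype.card κ - 1) ?_
  · simpa only [card_le_iff, Set.singleton_zero, zero_add] using relation
  intro x hx l ⟨_, _, hl, hxl⟩
  by_contra! hlt
  rw [Set.mem_singleton_iff, sub_eq_zero] at hxl
  refine h _ (L.sub_mem (L.sum_mem fun j (_ : j ∈ univ) => hv j) hx) ?_
  convert linearCombination_mem_intrinsicInterior_convexHull (v := v) (m := 1 - l)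
    (fun j => sub_pos.2 (hlt j)) ?_
  · rw [map_sub, hxl]
    simp [Fintype.linearCombination_apply]
  · simp [sum_sub_distrib, hl, Nat.cast_sub Fintype.card_pos]

end LatticeCount

section Newton

open scoped fwdDiff Nat

variable {M G : Type*} [AddCommMonoid M] [AddCommGroup G]

theorem fwdDiff_iter_eq_zero_of_le {h : M} {f : M → G} {a b : ℕ} (hab : a ≤ b)
    (hf : Δ_[h] ^[a] f = 0) : Δ_[h] ^[b] f = 0 := by
  rw [← fwdDiff_aux.coe_fwdDiffₗ_pow] at hf ⊢
  exact Module.End.pow_map_zero_of_le hab hf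

theorem fwdDiff_commute (g h : M) : Function.Commute (fwdDiff (G := G) g) (fwdDiff h) := by
  intro f
  ext y
  simp only [fwdDiff, add_right_comm y g h]
  abel

theorem shift_eq_sum_range_of_fwdDiff_iter_eq_zero {h : M} {f : M → G} {d : ℕ}
    (hf : Δ_[h] ^[d] f = 0) (k : ℕ) (y : M) :
    f (y + k • h) = ∑ a ∈ range d, k.choose a • Δ_[h] ^[a] f y := by
  rw [shift_eq_sum_fwdDiff_iter h f]
  refine sum_congr_of_eq_on_inter (fun a _ ha => ?_) (fun a _ ha => ?_) fun _ _ _ => rfl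
  · rw [fwdDiff_iter_eq_zero_of_le (by simpa using ha) hf, Pi.zero_apply, smul_zero]
  · rw [Nat.choose_eq_zero_of_lt (by rw [mem_range] at ha; lia), zero_smul]

theorem fwdDiff_iter_card_eq_sum_finset (κ : Type*) [Fintype κ] (h : M) (f : M → G) (y : M) :
    Δ_[h] ^[Fintype.card κ] f y =
      ∑ J : Finset κ, (-1 : ℤ) ^ #J • f (y + (Fintype.card κ - #J) • h) := by
  rw [fwdDiff_iter_eq_sum_shift, ← powerset_univ,
    sum_powerset_apply_card fun j => (-1 : ℤ) ^ j • f (y + (Fintype.card κ - j) • h), card_univ,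
    ← sum_flip]
  refine sum_congr rfl fun j hj => ?_
  have hj : j ≤ Fintype.card κ := Nat.lt_succ_iff.1 (mem_range.1 hj)
  rw [Nat.sub_sub_self hj, Nat.choose_symm hj, mul_comm, mul_smul, natCast_zsmul]

variable {σ R : Type*} [Field R] [CharZero R]

theorem exists_mvPolynomial_eval_eq_choose (i : σ) (a : ℕ) :
    ∃ p : MvPolynomial σ R, ∀ k : σ → ℕ,
      ((k i).choose a : R) = MvPolynomial.eval (fun i => (k i : R)) p := by
  refine ⟨MvPolynomial.C (a ! : R)⁻¹ * Polynomial.aeval (MvPolynomial.X i) (descPochhammer R a),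
    fun k => ?_⟩
  rw [map_mul, MvPolynomial.eval_C, ← MvPolynomial.coe_aeval_eq_eval, RingHom.coe_coe,
    ← Polynomial.aeval_algHom_apply, MvPolynomial.aeval_X, Polynomial.coe_aeval_eq_eval,
    Nat.cast_choose_eq_descPochhammer_div, div_eq_inv_mul]

-- Newton's forward difference formula, one variable at a time.
theorem exists_mvPolynomial_of_fwdDiff_iter_eq_zero [Finite σ] [DecidableEq σ]
    {f : (σ → ℕ) → R} {d : σ → ℕ} (hf : ∀ i, Δ_[Pi.single i 1] ^[d i] f = 0) :
    ∃ p : MvPolynomial σ R, ∀ k : σ → ℕ, f k = MvPolynomial.eval (fun i => (k i : R)) p := by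
  cases nonempty_fintype σ
  suffices ∀ S : Finset σ, ∃ p : MvPolynomial σ R, ∀ k : σ → ℕ,
      f (S.piecewise k 0) = MvPolynomial.eval (fun i => (k i : R)) p by
    simpa using this univ
  intro S
  induction S using Finset.induction_on generalizing f with
  | empty => exact ⟨MvPolynomial.C (f 0), by simp⟩
  | insert i S hi ih =>
    have iter_fwdDiff_eq_zero (a : ℕ) (j : σ) :
        Δ_[Pi.single j 1] ^[d j] (Δ_[Pi.single i 1] ^[a] f) = 0 := by
      rw [(fwdDiff_commute _ _).iterate_iterate, hf]
      exact Function.iterate_fixed (fwdDiff_const _ 0) a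
    choose p hp using fun a => ih (iter_fwdDiff_eq_zero a)
    choose b hb using exists_mvPolynomial_eval_eq_choose (R := R) i
    refine ⟨∑ a ∈ range (d i), b a * p a, fun k => ?_⟩
    have piecewise_insert_eq :
        (insert i S).piecewise k 0 = S.piecewise k 0 + k i • Pi.single i 1 := by
      ext j
      by_cases hj : j = i
      · subst hj
        simp [hi]
      · simp [hj, piecewise]
    rw [piecewise_insert_eq, shift_eq_sum_range_of_fwdDiff_iter_eq_zero (hf i)]
    simp only [hp, nsmul_eq_mul, hb, map_sum, map_mul]

end Newton

section Polynomial

open Polynomial Filter Topology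

theorem X_pow_card_dvd_sum_aeval_ite {σ R : Type*} [Fintype σ] [DecidableEq σ] [CommRing R]
    (p : MvPolynomial σ R) :
    (X : R[X]) ^ Fintype.card σ ∣ ∑ I : Finset σ, (-1) ^ (Fintype.card σ - #I) *
      MvPolynomial.aeval (fun i => if i ∈ I then (X : R[X]) else 0) p := by
  induction p using MvPolynomial.induction_on' with
  | monomial u c =>
    have prod_ite (I : Finset σ) :
        (-1) ^ (Fintype.card σ - #I) * ∏ i, (if i ∈ I then (X : R[X]) else 0) ^ u i =
          (∏ i ∈ I, X ^ u i) * ∏ i ∈ Iᶜ, -0 ^ u i := by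
      rw [prod_neg, card_compl, mul_left_comm, ← prod_mul_prod_compl I]
      congr 2 <;> refine prod_congr rfl fun i hi => ?_
      · rw [if_pos hi]
      · rw [if_neg (mem_compl.1 hi)]
    simp only [MvPolynomial.aeval_monomial, Finsupp.prod_fintype _ _ fun _ => pow_zero _,
      mul_left_comm _ (algebraMap R R[X] c), prod_ite]
    rw [← mul_sum, ← Fintype.prod_add, ← card_univ, ← prod_const]
    refine dvd_mul_of_dvd_right (prod_dvd_prod_of_dvd _ _ fun i _ => ?_) _
    rcases eq_or_ne (u i) 0 with hi | hi
    · simp [hi]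
    · simp [hi]
  | add p q hp hq =>
    simpa only [map_add, mul_add, sum_add_distrib] using dvd_add hp hq

theorem eq_C_mul_X_pow_of_tendsto {g : ℝ[X]} {n : ℕ} {c : ℝ} (hg : X ^ n ∣ g)
    (h : Tendsto (fun N : ℕ => g.eval (N : ℝ) / N ^ n) atTop (𝓝 c)) : g = C c * X ^ n := by
  obtain ⟨r, rfl⟩ := hg
  have tendsto_eval : Tendsto (fun N : ℕ => r.eval (N : ℝ)) atTop (𝓝 c) := by
    refine h.congr' ?_
    filter_upwards [eventually_ne_atTop 0] with N hN
    rw [eval_mul, eval_pow, eval_X, mul_div_cancel_left₀ _ (by positivity)]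
  have degree_le : r.degree ≤ 0 := by
    by_contra! hr
    exact not_tendsto_atTop_of_tendsto_nhds tendsto_eval.abs
      ((r.abs_tendsto_atTop hr).comp tendsto_natCast_atTop_atTop)
  rw [eq_C_of_degree_le_zero degree_le] at tendsto_eval ⊢
  simp only [eval_C, tendsto_const_nhds_iff] at tendsto_eval
  rw [tendsto_eval, mul_comm]

theorem eq_of_forall_eval_natCast_eq {R : Type*} [CommRing R] [IsDomain R] [CharZero R]
    {p q : R[X]} (h : ∀ N : ℕ, p.eval (N : R) = q.eval (N : R)) : p = q :=
  eq_of_infinite_eval_eq p q <|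
    (Set.infinite_range_of_injective Nat.cast_injective).mono (Set.range_subset_iff.2 h)

end Polynomial

section MinkowskiCombination

variable {σ E : Type*} [AddCommGroup E] [Module ℝ E] {P : σ → Set E}

theorem sum_add_nsmul_single_smul [Fintype σ] [DecidableEq σ] {i : σ} (hP : Convex ℝ (P i))
    (k : σ → ℕ) (m : ℕ) :
    ∑ j, ((k + m • Pi.single i 1 : σ → ℕ) j : ℝ) • P j =
      ∑ j, (k j : ℝ) • P j + (m : ℝ) • P i := by
  rw [← add_sum_erase _ _ (mem_univ i), ← add_sum_erase _ (fun j => (k j : ℝ) • P j) (mem_univ i),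
    add_right_comm, ← hP.add_smul (Nat.cast_nonneg _) (Nat.cast_nonneg _)]
  congr 1
  · simp
  · exact sum_congr rfl fun j hj => by simp [ne_of_mem_erase hj]

theorem sum_ite_smul_eq_smul_sum [Fintype σ] [DecidableEq σ] (hP : ∀ i, (P i).Nonempty)
    (I : Finset σ) (N : ℕ) :
    ∑ i, ((if i ∈ I then N else 0 : ℕ) : ℝ) • P i = (N : ℝ) • ∑ i ∈ I, P i := by
  rw [smul_sum, ← sum_filter_add_sum_filter_not univ (· ∈ I)]
  rw [sum_eq_zero (s := {i | i ∉ I}) fun i hi => by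
    simp [(mem_filter.1 hi).2, Set.zero_smul_set (hP i)], add_zero]
  exact sum_congr (by simp) fun i hi => by simp [hi]

end MinkowskiCombination

section Ehrhart

open Polynomial
open scoped fwdDiff

variable {σ E : Type*} [Fintype σ] [NormedAddCommGroup E] [NormedSpace ℝ E]
  [FiniteDimensional ℝ E] {L : AddSubgroup E} [DiscreteTopology L]

theorem exists_mvPolynomial_eval_eq_latticeCount {V : σ → Finset E} (hV : ∀ i, (V i).Nonempty)
    (hVL : ∀ i, ∀ v ∈ V i, v ∈ L) :
    ∃ p : MvPolynomial σ ℝ, ∀ k : σ → ℕ,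
      (latticeCount L (∑ i, (k i : ℝ) • convexHull ℝ (V i : Set E)) : ℝ) =
        MvPolynomial.eval (fun i => (k i : ℝ)) p := by
  classical
  refine exists_mvPolynomial_of_fwdDiff_iter_eq_zero (d := fun i => Fintype.card (V i)) fun i => ?_
  ext k
  have : Nonempty (V i) := (hV i).to_subtype
  have isCompact_hull (j : σ) : IsCompact (convexHull ℝ (V j : Set E)) :=
    (V j).finite_toSet.isCompact_convexHull ℝ
  have relation := sum_neg_one_pow_mul_latticeCount_add_smul
    (L := L) (v := ((↑) : V i → E)) (fun v => hVL i v v.2)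
    (R := ∑ j, (k j : ℝ) • convexHull ℝ (V j : Set E))
    (sum_induction _ IsCompact (fun _ _ => IsCompact.add) isCompact_singleton
      fun j _ => (isCompact_hull j).smul _)
    (convex_sum _ fun j _ => (convex_convexHull ℝ _).smul _)
  rw [fwdDiff_iter_card_eq_sum_finset]
  simp only [sum_add_nsmul_single_smul (P := fun j => convexHull ℝ (V j : Set E))
    (convex_convexHull ℝ _)]
  simpa [Subtype.range_coe] using congrArg (Int.cast : ℤ → ℝ) relation

theorem exists_polynomial_family_eval_eq_latticeCount {V : σ → Finset E}
    (hV : ∀ i, (V i).Nonempty) (hVL : ∀ i, ∀ v ∈ V i, v ∈ L) :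
    ∃ q : Finset σ → ℝ[X],
      (∀ I, ∀ N : ℕ, (q I).eval (N : ℝ) =
        latticeCount L ((N : ℝ) • ∑ i ∈ I, convexHull ℝ (V i : Set E))) ∧
      X ^ Fintype.card σ ∣ ∑ I, (-1) ^ (Fintype.card σ - #I) * q I := by
  classical
  obtain ⟨p, hp⟩ := exists_mvPolynomial_eval_eq_latticeCount hV hVL
  refine ⟨fun I => MvPolynomial.aeval (fun i => if i ∈ I then X else 0) p, fun I N => ?_,
    X_pow_card_dvd_sum_aeval_ite p⟩
  rw [← sum_ite_smul_eq_smul_sum (fun i => (hV i).to_set.convexHull) I N, hp,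
    ← coe_aeval_eq_eval, ← AlgHom.comp_apply, MvPolynomial.comp_aeval,
    ← MvPolynomial.coe_aeval_eq_eval]
  congr! 3 with i
  simp [apply_ite]

-- The relation among the counts for `(N + k) • P`, being polynomial in `N`, holds at `N = -1`;
-- for hollow `P` it also holds there without its term at `k = 0`, which therefore vanishes.
theorem eval_neg_one_eq_zero_of_latticeCount {V : Finset E} (hV : V.Nonempty)
    (hVL : ∀ v ∈ V, v ∈ L) (h : ∀ x ∈ L, x ∉ intrinsicInterior ℝ (convexHull ℝ (V : Set E)))
    {q : ℝ[X]}
    (hq : ∀ N : ℕ, q.eval (N : ℝ) = latticeCount L ((N : ℝ) • convexHull ℝ (V : Set E))) :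
    q.eval (-1) = 0 := by
  classical
  have : Nonempty V := hV.to_subtype
  have range_coe : Set.range ((↑) : V → E) = V := Subtype.range_coe
  have relation_eq_zero : ∑ J : Finset V,
      (-1 : ℝ[X]) ^ #J * q.comp (X + C ((Fintype.card V - #J : ℕ) : ℝ)) = 0 := by
    refine eq_of_forall_eval_natCast_eq fun N => ?_
    have relation := sum_neg_one_pow_mul_latticeCount_add_smul (L := L) (v := ((↑) : V → E))
      (fun v => hVL v v.2) ((V.finite_toSet.isCompact_convexHull ℝ).smul (N : ℝ))
      ((convex_convexHull ℝ _).smul _)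
    simp only [range_coe, ← (convex_convexHull ℝ (V : Set E)).add_smul (Nat.cast_nonneg _)
      (Nat.cast_nonneg _), ← Nat.cast_add] at relation
    simpa [eval_finsetSum, ← hq, ← Nat.cast_add] using congrArg (Int.cast : ℤ → ℝ) relation
  have relation_hollow : ∑ J : Finset V with J ≠ univ,
      (-1 : ℝ) ^ #J * q.eval (-1 + ((Fintype.card V - #J : ℕ) : ℝ)) = 0 := by
    have relation := sum_neg_one_pow_mul_latticeCount_smul (L := L) (v := ((↑) : V → E))
      (fun v => hVL v v.2) (by rwa [range_coe])
    rw [← Int.cast_zero, ← relation, Int.cast_sum]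
    refine sum_congr rfl fun J hJ => ?_
    have hJ : 1 ≤ Fintype.card V - #J :=
      Nat.sub_pos_of_lt ((card_lt_iff_ne_univ J).2 (mem_filter.1 hJ).2)
    rw [range_coe, Nat.sub_right_comm, neg_add_eq_sub, ← Nat.cast_pred hJ, hq]
    push_cast
    rfl
  have relation_neg_one := congrArg (eval (-1)) relation_eq_zero
  simp only [eval_finsetSum, eval_mul, eval_pow, eval_neg, eval_one, eval_comp, eval_add, eval_X,
    eval_C, eval_zero] at relation_neg_one
  rw [← add_sum_erase _ _ (mem_univ univ), ← filter_ne', relation_hollow] at relation_neg_one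
  simpa using relation_neg_one

end Ehrhart

section IntegerLattice

open Filter Topology

variable {n : ℕ} {ι : Type*} {A B : Set (Fin n → ℝ)}

/-- The lattice `ℤⁿ` in `ℝⁿ`, as a `ℤ`-span because this form has a discreteness instance and
occurs in `tendsto_card_div_pow_atTop_volume`. -/
def integerLattice (n : ℕ) : AddSubgroup (Fin n → ℝ) :=
  (Submodule.span ℤ (Set.range (Pi.basisFun ℝ (Fin n)))).toAddSubgroup

instance : DiscreteTopology (integerLattice n) :=
  inferInstanceAs (DiscreteTopology (Submodule.span ℤ (Set.range (Pi.basisFun ℝ (Fin n)))))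

theorem mem_integerLattice_iff {x : Fin n → ℝ} : x ∈ integerLattice n ↔ IsLatticePt x := by
  simp only [integerLattice, Submodule.mem_toAddSubgroup, Module.Basis.mem_span_iff_repr_mem,
    Pi.basisFun_repr, Set.mem_range, algebraMap_int_eq, eq_intCast, IsLatticePt, eq_comm]

theorem tendsto_latticeCount_smul_div_pow (hA : IsCompact A) (hA' : Convex ℝ A) :
    Tendsto (fun N : ℕ => (latticeCount (integerLattice n) ((N : ℝ) • A) : ℝ) / N ^ n) atTop
      (𝓝 (volume A).toReal) := by
  have tendsto_card := tendsto_card_div_pow_atTop_volume A hA.isBounded hA.measurableSet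
    (hA'.addHaar_frontier volume)
  rw [Fintype.card_fin] at tendsto_card
  refine tendsto_card.congr' ?_
  filter_upwards [eventually_ne_atTop 0] with N hN
  have hN' : (N : ℝ) ≠ 0 := Nat.cast_ne_zero.2 hN
  rw [Nat.card_coe_set_eq, ← Set.ncard_smul_set (Units.mk0 _ hN'), Units.smul_mk0,
    Set.smul_set_inter₀ hN', smul_inv_smul₀ hN']
  rfl

theorem IsLatticePolytope.isCompact (hA : IsLatticePolytope A) : IsCompact A := by
  obtain ⟨V, -, -, rfl⟩ := hA
  exact V.finite_toSet.isCompact_convexHull ℝ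

theorem IsLatticePolytope.convex (hA : IsLatticePolytope A) : Convex ℝ A := by
  obtain ⟨V, -, -, rfl⟩ := hA
  exact convex_convexHull ℝ _

theorem IsLatticePolytope.exists_isLatticePt (hA : IsLatticePolytope A) :
    ∃ x ∈ A, IsLatticePt x := by
  obtain ⟨V, ⟨x, hx⟩, hV, rfl⟩ := hA
  exact ⟨x, subset_convexHull ℝ _ hx, hV x hx⟩

theorem IsLatticePolytope.zero : IsLatticePolytope (0 : Set (Fin n → ℝ)) :=
  ⟨0, zero_nonempty, fun _ hv => mem_integerLattice_iff.1 (mem_zero.1 hv ▸ zero_mem _), by simp⟩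

theorem IsLatticePolytope.add (hA : IsLatticePolytope A) (hB : IsLatticePolytope B) :
    IsLatticePolytope (A + B) := by
  classical
  obtain ⟨V, hV, hVL, rfl⟩ := hA
  obtain ⟨W, hW, hWL, rfl⟩ := hB
  refine ⟨V + W, hV.add hW, ?_, by rw [coe_add, convexHull_add]⟩
  simp only [← mem_integerLattice_iff] at hVL hWL ⊢
  intro x hx
  obtain ⟨v, hv, w, hw, rfl⟩ := mem_add.1 hx
  exact add_mem (hVL v hv) (hWL w hw)

theorem IsLatticePolytope.sum {P : ι → Set (Fin n → ℝ)} (hP : ∀ i, IsLatticePolytope (P i))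
    (I : Finset ι) : IsLatticePolytope (∑ i ∈ I, P i) :=
  sum_induction _ _ (fun _ _ => .add) .zero fun i _ => hP i

end IntegerLattice

section Hollow

open Polynomial

variable {n : ℕ} {ι : Type*} {A B : Set (Fin n → ℝ)}

theorem IsLatticePolytope.interior_nonempty (hA : IsLatticePolytope A) (h : adim A = n) :
    (interior A).Nonempty := by
  obtain ⟨x, hx, -⟩ := hA.exists_isLatticePt
  rw [hA.convex.interior_nonempty_iff_affineSpan_eq_top,
    ← AffineSubspace.direction_eq_top_iff_of_nonempty ((affineSpan_nonempty ℝ).2 ⟨x, hx⟩)]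
  exact Submodule.eq_top_of_finrank_eq (h.trans (Module.finrank_fin_fun ℝ).symm)

theorem relintLat_eq_empty_of_intLat_add_eq_empty (hA : IsLatticePolytope A)
    (hB : (interior B).Nonempty) (h : intLat (A + B) = ∅) : relintLat B = ∅ := by
  obtain ⟨x, hx, hxL⟩ := hA.exists_isLatticePt
  rw [← mem_integerLattice_iff] at hxL
  exact Set.eq_empty_of_forall_notMem fun y ⟨hy, hyL⟩ => h.subset
    ⟨subset_interior_add_right (Set.add_mem_add hx (intrinsicInterior_subset_interior hB hy)),
    mem_integerLattice_iff.1 (add_mem hxL (mem_integerLattice_iff.2 hyL))⟩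

theorem relintLat_sum_eq_empty [Fintype ι] {P : ι → Set (Fin n → ℝ)}
    (hP : ∀ i, IsLatticePolytope (P i)) (hdim : ∀ i, adim (P i) = n)
    (hhollow : intLat (∑ i, P i) = ∅) {I : Finset ι} (hI : I.Nonempty) :
    relintLat (∑ i ∈ I, P i) = ∅ := by
  classical
  have interior_sum_nonempty : (interior (∑ i ∈ I, P i)).Nonempty := by
    obtain ⟨i, hi⟩ := hI
    obtain ⟨x, hx, -⟩ := (IsLatticePolytope.sum hP (I.erase i)).exists_isLatticePt
    rw [← sum_erase_add _ _ hi]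
    exact (Set.Nonempty.add ⟨x, hx⟩ ((hP i).interior_nonempty (hdim i))).mono
      subset_interior_add_right
  exact relintLat_eq_empty_of_intLat_add_eq_empty (IsLatticePolytope.sum hP Iᶜ)
    interior_sum_nonempty (by rwa [sum_compl_add_sum])

theorem IsLatticePolytope.eval_neg_one_eq_zero (hA : IsLatticePolytope A) (h : relintLat A = ∅)
    {q : ℝ[X]} (hq : ∀ N : ℕ, q.eval (N : ℝ) = latticeCount (integerLattice n) ((N : ℝ) • A)) :
    q.eval (-1) = 0 := by
  obtain ⟨V, hV, hVL, rfl⟩ := hA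
  exact eval_neg_one_eq_zero_of_latticeCount hV (fun v hv => mem_integerLattice_iff.2 (hVL v hv))
    (fun x hxL hx => h.subset ⟨hx, mem_integerLattice_iff.1 hxL⟩) hq

theorem mixedVol_eq_one_of_hollow_general {n : ℕ} (P : Fin n → Set (Fin n → ℝ))
    (hP : ∀ i, IsLatticePolytope (P i))
    (hhollow : ∀ I : Finset (Fin n), I.Nonempty → relintLat (∑ i ∈ I, P i) = ∅) :
    mixedVol P = 1 := by
  have isLatticePolytope_sum := IsLatticePolytope.sum hP
  choose V hV hVL hPV using hP
  simp only [← mem_integerLattice_iff] at hVL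
  obtain ⟨q, hq, hdvd⟩ := exists_polynomial_family_eval_eq_latticeCount hV hVL
  simp only [← hPV, Fintype.card_fin] at hq hdvd
  have sum_eq : ∑ I, (-1) ^ (n - #I) * q I = C (mixedVol P) * X ^ n := by
    refine eq_C_mul_X_pow_of_tendsto hdvd ?_
    simp only [eval_finsetSum, eval_mul, eval_pow, eval_neg, eval_one, sum_div, mul_div_assoc, hq]
    exact tendsto_finsetSum _ fun I _ => (tendsto_latticeCount_smul_div_pow
      (isLatticePolytope_sum I).isCompact (isLatticePolytope_sum I).convex).const_mul _
  have q_empty : q ∅ = 1 := eq_of_forall_eval_natCast_eq fun N => by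
    simp [hq, ← Set.singleton_zero, latticeCount_singleton_zero]
  have eval_neg_one_eq_zero (I : Finset (Fin n)) (hI : I ≠ ∅) : (q I).eval (-1) = 0 :=
    (isLatticePolytope_sum I).eval_neg_one_eq_zero (hhollow I (nonempty_iff_ne_empty.2 hI)) (hq I)
  have eval_sum_eq := congrArg (eval (-1)) sum_eq
  rw [eval_finsetSum, sum_eq_single ∅ (fun I _ hI => by
    rw [eval_mul, eval_neg_one_eq_zero I hI, mul_zero]) (by simp)] at eval_sum_eq
  simpa [q_empty] using eval_sum_eq.symm

end Hollow

/-- a full-dimensional family with hollow Minkowski sum has mixed volume one. -/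
theorem mixedVol_eq_one_of_hollow {n : ℕ}
    (P : Fin n → Set (Fin n → ℝ)) (hP : ∀ i, IsLatticePolytope (P i))
    (hdim : ∀ i, adim (P i) = n)
    (hhollow : intLat (∑ i, P i) = ∅) :
    mixedVol P = 1 :=
  mixedVol_eq_one_of_hollow_general P hP fun _ hI =>
    relintLat_sum_eq_empty hP hdim hhollow hI
end
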